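/- Let U ⊆ ℝ⁴ be a nonempty open connected (e.g. convex) set and let D : U → ℝ be smooth with D > 0 on U. If the Ricci tensor of the reduced Lychagin–Rubtsov metric G_D (computed from the coordinate Christoffel symbols and curvature tensor) vanishes identically on U, then there exist constants c₁, …, c₆ ∈ ℝ with c₂c₄ + c₃c₅ − c₁c₆ = 0 such that, setting L(x,y,p,q) = c₁ + c₂x + c₃y + c₄p + c₅q + c₆(xp + yq), one has L ≠ 0 on U and D = L⁻² on U. -/

import Mathlib

/-- Partial derivative of `f : ℝ⁴ → ℝ` in the `i`-th coordinate direction. -/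
noncomputable def pd (i : Fin 4) (f : (Fin 4 → ℝ) → ℝ) (u : Fin 4 → ℝ) : ℝ :=
  fderiv ℝ f u (Pi.single i 1)

/-- Christoffel symbols `Γᵏᵢⱼ` of a matrix-valued metric `g` in coordinates. -/
noncomputable def christoffel (g : (Fin 4 → ℝ) → Matrix (Fin 4) (Fin 4) ℝ)
    (k i j : Fin 4) (u : Fin 4 → ℝ) : ℝ :=
  (1 / 2) * ∑ l, (g u)⁻¹ k l *
    (pd i (fun v => g v j l) u + pd j (fun v => g v i l) u - pd l (fun v => g v i j) u)

/-- Curvature tensor `Rˡᵢⱼₖ` of a matrix-valued metric `g` in coordinates. -/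
noncomputable def riemann (g : (Fin 4 → ℝ) → Matrix (Fin 4) (Fin 4) ℝ)
    (l i j k : Fin 4) (u : Fin 4 → ℝ) : ℝ :=
  pd j (christoffel g l i k) u - pd k (christoffel g l i j) u +
    ∑ m, (christoffel g l j m u * christoffel g m i k u -
          christoffel g l k m u * christoffel g m i j u)

/-- Ricci tensor `Ricᵢₖ = Σₗ Rˡᵢₗₖ`. -/
noncomputable def ricci (g : (Fin 4 → ℝ) → Matrix (Fin 4) (Fin 4) ℝ)
    (i k : Fin 4) (u : Fin 4 → ℝ) : ℝ :=
  ∑ l, riemann g l i l k u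

/-- Scalar curvature `R = Σᵢₖ (g⁻¹)ⁱᵏ Ricᵢₖ`. -/
noncomputable def scalarCurv (g : (Fin 4 → ℝ) → Matrix (Fin 4) (Fin 4) ℝ)
    (u : Fin 4 → ℝ) : ℝ :=
  ∑ i, ∑ k, (g u)⁻¹ i k * ricci g i k u

/-- The reduced Lychagin–Rubtsov metric associated with `D : ℝ⁴ → ℝ`. -/
noncomputable def GD (D : (Fin 4 → ℝ) → ℝ) (u : Fin 4 → ℝ) :
    Matrix (Fin 4) (Fin 4) ℝ :=
  !![0, 0, D u, 0;
     0, 0, 0, D u;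
     D u, 0, 0, 0;
     0, D u, 0, 0]



theorem pd_congr {U : Set (Fin 4 → ℝ)} (hU : IsOpen U) {f g : (Fin 4 → ℝ) → ℝ}
    (h : ∀ u ∈ U, f u = g u) (i : Fin 4) : ∀ u ∈ U, pd i f u = pd i g u := by
  intro u hu
  have : f =ᶠ[nhds u] g := by
    filter_upwards [hU.mem_nhds hu] with v hv using h v hv
  simp only [pd, this.fderiv_eq]

theorem pd_zero_of {U : Set (Fin 4 → ℝ)} (hU : IsOpen U) {f : (Fin 4 → ℝ) → ℝ}
    (h : ∀ u ∈ U, f u = 0) (i : Fin 4) : ∀ u ∈ U, pd i f u = 0 := by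
  intro u hu
  rw [pd_congr hU (g := fun _ => 0) h i u hu]
  simp [pd]

theorem pd_smooth {U : Set (Fin 4 → ℝ)} (hU : IsOpen U) {f : (Fin 4 → ℝ) → ℝ}
    (h : ContDiffOn ℝ (⊤ : ℕ∞) f U) (i : Fin 4) : ContDiffOn ℝ (⊤ : ℕ∞) (pd i f) U :=
  (h.fderiv_of_isOpen hU (by simp)).clm_apply contDiffOn_const

theorem diffAt_of {U : Set (Fin 4 → ℝ)} (hU : IsOpen U) {f : (Fin 4 → ℝ) → ℝ}
    (h : ContDiffOn ℝ (⊤ : ℕ∞) f U) {u : Fin 4 → ℝ} (hu : u ∈ U) : DifferentiableAt ℝ f u :=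
  (h.differentiableOn (by simp)).differentiableAt (hU.mem_nhds hu)

theorem pd_symm {U : Set (Fin 4 → ℝ)} (hU : IsOpen U) {f : (Fin 4 → ℝ) → ℝ}
    (h : ContDiffOn ℝ (⊤ : ℕ∞) f U) (i j : Fin 4) {u : Fin 4 → ℝ} (hu : u ∈ U) :
    pd i (pd j f) u = pd j (pd i f) u := by
  have hc : ContDiffAt ℝ (⊤ : ℕ∞) f u := h.contDiffAt (hU.mem_nhds hu)
  have hs := hc.isSymmSndFDerivAt (by
    simp only [minSmoothness_of_isRCLikeNormedField]
    exact WithTop.coe_le_coe.2 (le_top : (2 : ℕ∞) ≤ ⊤))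
  have hd : DifferentiableAt ℝ (fderiv ℝ f) u :=
    ((h.fderiv_of_isOpen hU (m := (⊤ : ℕ∞)) (by simp)).differentiableOn
      (by simp)).differentiableAt (hU.mem_nhds hu)
  have key : ∀ a b : Fin 4, pd a (pd b f) u
      = fderiv ℝ (fderiv ℝ f) u (Pi.single a 1) (Pi.single b 1) := by
    intro a b
    have := (hd.hasFDerivAt.clm_apply (hasFDerivAt_const (Pi.single b (1:ℝ)) u)).fderiv
    change fderiv ℝ (fun v => fderiv ℝ f v (Pi.single b 1)) u (Pi.single a 1) = _
    rw [this]; simp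
  rw [key, key]
  exact hs _ _

theorem const_of_pd {U : Set (Fin 4 → ℝ)} (hU : IsOpen U) (hc : IsPreconnected U)
    {f : (Fin 4 → ℝ) → ℝ} (hf : ContDiffOn ℝ (⊤ : ℕ∞) f U)
    (h : ∀ i, ∀ u ∈ U, pd i f u = 0) : ∃ c, ∀ u ∈ U, f u = c := by
  apply hU.exists_is_const_of_fderiv_eq_zero hc (hf.differentiableOn (by simp))
  intro u hu
  have : ((fderiv ℝ f u : (Fin 4 → ℝ) →L[ℝ] ℝ) : (Fin 4 → ℝ) →ₗ[ℝ] ℝ) = 0 := by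
    apply LinearMap.pi_ext'
    intro i
    ext
    simpa [pd] using h i u hu
  ext v
  exact LinearMap.congr_fun this v

/-- entries of the flat metric -/
def et (i j : Fin 4) : ℝ := if j = i + 2 then 1 else 0

theorem GD_apply (D : (Fin 4 → ℝ) → ℝ) (v : Fin 4 → ℝ) (i j : Fin 4) :
    GD D v i j = et i j * D v := by
  fin_cases i <;> fin_cases j <;> simp [GD, et]

theorem GD_inv (D : (Fin 4 → ℝ) → ℝ) (v : Fin 4 → ℝ) (h : D v ≠ 0) (i j : Fin 4) :
    (GD D v)⁻¹ i j = et i j * (D v)⁻¹ := by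
  have : (GD D v)⁻¹ = GD (fun w => (D w)⁻¹) v := by
    apply Matrix.inv_eq_right_inv
    ext i j
    fin_cases i <;> fin_cases j <;> simp [GD, Matrix.mul_apply, Fin.sum_univ_four, h]
  rw [this, GD_apply]

/-- minus half of the logarithmic derivative -/
noncomputable def lg (D : (Fin 4 → ℝ) → ℝ) (i : Fin 4) (v : Fin 4 → ℝ) : ℝ :=
  -(1/2) * (pd i D v * (D v)⁻¹)

/-- Kronecker delta -/
def kd (i j : Fin 4) : ℝ := if i = j then 1 else 0

theorem pd_et (D : (Fin 4 → ℝ) → ℝ) {v : Fin 4 → ℝ} (h : DifferentiableAt ℝ D v) (i j l : Fin 4) :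
    pd i (fun w => GD D w j l) v = et j l * pd i D v := by
  simp only [GD_apply, pd]
  rw [fderiv_const_mul h]; simp

theorem chr_eq (D : (Fin 4 → ℝ) → ℝ) {v : Fin 4 → ℝ} (h : DifferentiableAt ℝ D v)
    (h0 : D v ≠ 0) (k i j : Fin 4) :
    christoffel (GD D) k i j v =
      -kd k i * lg D j v + -kd k j * lg D i v + et i j * lg D (k + 2) v := by
  simp only [christoffel, pd_et D h, GD_inv D v h0, lg]
  have : ∀ F : Fin 4 → ℝ, ∑ l, et k l * (D v)⁻¹ * F l = (D v)⁻¹ * F (k+2) := by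
    intro F; simp [et]
  rw [this]
  have e : ∀ i k : Fin 4, et i (k+2) = kd k i := by
    intro i k; simp [et, kd]
  rw [e, e]; ring

theorem pd_chr {U : Set (Fin 4 → ℝ)} (hU : IsOpen U) (D : (Fin 4 → ℝ) → ℝ)
    (hD : ContDiffOn ℝ (⊤ : ℕ∞) D U) (h0 : ∀ u ∈ U, D u ≠ 0)
    (hA : ∀ i, ContDiffOn ℝ (⊤ : ℕ∞) (lg D i) U) (m k i j : Fin 4) {u : Fin 4 → ℝ} (hu : u ∈ U) :
    pd m (christoffel (GD D) k i j) u =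
      -kd k i * pd m (lg D j) u + -kd k j * pd m (lg D i) u + et i j * pd m (lg D (k + 2)) u := by
  rw [pd_congr hU (fun v hv => chr_eq D (diffAt_of hU hD hv) (h0 v hv) k i j) m u hu]
  have d := fun i => (diffAt_of hU (hA i) hu).hasFDerivAt
  have := ((((d j).const_mul (-kd k i)).add ((d i).const_mul (-kd k j))).add
    ((d (k+2)).const_mul (et i j))).fderiv
  simp only [pd]
  erw [this]
  simp

theorem ricci_eq {U : Set (Fin 4 → ℝ)} (hU : IsOpen U) (D : (Fin 4 → ℝ) → ℝ)
    (hD : ContDiffOn ℝ (⊤ : ℕ∞) D U) (h0 : ∀ u ∈ U, D u ≠ 0)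
    (hA : ∀ i, ContDiffOn ℝ (⊤ : ℕ∞) (lg D i) U)
    {u : Fin 4 → ℝ} (hu : u ∈ U) (hs : ∀ i j, pd i (lg D j) u = pd j (lg D i) u) (i k : Fin 4) :
    ricci (GD D) i k u = 2 * (pd i (lg D k) u + lg D i u * lg D k u)
      + et i k * (2 * (pd 0 (lg D 2) u + pd 1 (lg D 3) u)
        - 4 * (lg D 0 u * lg D 2 u + lg D 1 u * lg D 3 u)) := by
  have e1 := hs 1 0
  have e2 := hs 2 0
  have e3 := hs 3 0
  have e4 := hs 2 1
  have e5 := hs 3 1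
  have e6 := hs 3 2
  simp only [ricci, riemann, pd_chr hU D hD h0 hA _ _ _ _ hu,
    chr_eq D (diffAt_of hU hD hu) (h0 u hu), Fin.sum_univ_four]
  fin_cases i <;> fin_cases k <;> simp [kd, et, e1, e2, e3, e4, e5, e6] <;> ring

theorem final_L {U : Set (Fin 4 → ℝ)} (hU : IsOpen U) (hc : IsPreconnected U)
    {L : (Fin 4 → ℝ) → ℝ} (hL : ContDiffOn ℝ (⊤ : ℕ∞) L U) (c6 : ℝ)
    (h : ∀ i j, ∀ u ∈ U, pd i (pd j L) u = et j i * c6) :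
    ∃ (c : Fin 4 → ℝ) (c1 : ℝ), (∀ j, ∀ u ∈ U, pd j L u = c j + c6 * u (j + 2)) ∧
      ∀ u ∈ U, L u = c1 + c 0 * u 0 + c 1 * u 1 + c 2 * u 2 + c 3 * u 3
        + c6 * (u 0 * u 2 + u 1 * u 3) := by
  have hco : ∀ j (u : Fin 4 → ℝ), HasFDerivAt (fun v : Fin 4 → ℝ => v j)
    (ContinuousLinearMap.proj j : (Fin 4 → ℝ) →L[ℝ] ℝ) u := fun j u => hasFDerivAt_apply j u
  have h1 : ∀ j, ∃ c, ∀ u ∈ U, pd j L u - c6 * u (j + 2) = c := by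
    intro j
    apply const_of_pd hU hc (f := fun u => pd j L u - c6 * u (j + 2))
    · exact (pd_smooth hU hL j).sub (by fun_prop)
    · intro i u hu
      have := ((diffAt_of hU (pd_smooth hU hL j) hu).hasFDerivAt.sub
        ((hco (j+2) u).const_mul c6)).fderiv
      have h2 := h i j u hu
      unfold pd at h2 ⊢
      erw [this]
      simp only [ContinuousLinearMap.sub_apply, ContinuousLinearMap.smul_apply, smul_eq_mul,
        ContinuousLinearMap.proj_apply]
      erw [h2]
      by_cases hij : i = j + 2
      · subst hij; simp [et]
      · simp [et, hij, Pi.single_apply, Ne.symm hij]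
  choose c hcc using h1
  have h3 : ∀ j, ∀ u ∈ U, pd j L u = c j + c6 * u (j + 2) := by
    intro j u hu; linarith [hcc j u hu]
  obtain ⟨c1, hc1⟩ := const_of_pd hU hc (f := fun u => L u - (c 0 * u 0 + c 1 * u 1 + c 2 * u 2
      + c 3 * u 3 + c6 * (u 0 * u 2 + u 1 * u 3))) (hL.sub (by fun_prop)) (by
    intro i u hu
    have := ((diffAt_of hU hL hu).hasFDerivAt.sub
        ((((((hco 0 u).const_mul (c 0)).add ((hco 1 u).const_mul (c 1))).add
          ((hco 2 u).const_mul (c 2))).add ((hco 3 u).const_mul (c 3))).add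
          ((((hco 0 u).mul (hco 2 u)).add ((hco 1 u).mul (hco 3 u))).const_mul c6))).fderiv
    have h2 := h3 i u hu
    unfold pd at h2 ⊢
    erw [this]
    rw [ContinuousLinearMap.sub_apply, h2]
    fin_cases i <;> simp)
  exact ⟨c, c1, h3, fun u hu => by linarith [hc1 u hu]⟩

theorem pd_L {D : (Fin 4 → ℝ) → ℝ} {u : Fin 4 → ℝ} (hd : DifferentiableAt ℝ D u)
    (hp : 0 < D u) (i : Fin 4) :
    pd i (fun v => (√(D v))⁻¹) u = (√(D u))⁻¹ * lg D i u := by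
  have h1 := (Real.hasDerivAt_sqrt hp.ne').inv (Real.sqrt_pos.2 hp).ne'
  have := (h1.comp_hasFDerivAt u hd.hasFDerivAt).fderiv
  unfold lg pd
  erw [this]
  have hs := Real.sq_sqrt hp.le
  have hs0 := (Real.sqrt_pos.2 hp).ne'
  simp only [ContinuousLinearMap.smul_apply, smul_eq_mul]
  rw [← hs, Real.sqrt_sq (Real.sqrt_nonneg _)]
  field_simp

/-- If `D` is smooth and positive on a nonempty open connected set `U ⊆ ℝ⁴` and the
Ricci tensor of the reduced Lychagin–Rubtsov metric `G_D` vanishes identically on `U`,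
then `D = L⁻²` on `U` for some `L(x,y,p,q) = c₁ + c₂x + c₃y + c₄p + c₅q + c₆(xp + yq)`
which is nonzero on `U`, with `c₂c₄ + c₃c₅ − c₁c₆ = 0`.
Coordinates: `x = u 0`, `y = u 1`, `p = u 2`, `q = u 3`. -/
theorem plucker_of_ricci_flat (U : Set (Fin 4 → ℝ)) (hU : IsOpen U)
    (hUne : U.Nonempty) (hUconn : IsPreconnected U)
    (D : (Fin 4 → ℝ) → ℝ) (hD : ContDiffOn ℝ (⊤ : ℕ∞) D U) (hDpos : ∀ u ∈ U, 0 < D u)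
    (hRic : ∀ u ∈ U, ∀ i k : Fin 4, ricci (GD D) i k u = 0) :
    ∃ c₁ c₂ c₃ c₄ c₅ c₆ : ℝ, c₂ * c₄ + c₃ * c₅ - c₁ * c₆ = 0 ∧
      ∀ u ∈ U,
        (c₁ + c₂ * u 0 + c₃ * u 1 + c₄ * u 2 + c₅ * u 3 +
            c₆ * (u 0 * u 2 + u 1 * u 3)) ≠ 0 ∧
        D u = ((c₁ + c₂ * u 0 + c₃ * u 1 + c₄ * u 2 + c₅ * u 3 +
            c₆ * (u 0 * u 2 + u 1 * u 3)) ^ 2)⁻¹ := by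
  have h0 : ∀ u ∈ U, D u ≠ 0 := fun u hu => (hDpos u hu).ne'
  have hA : ∀ i, ContDiffOn ℝ (⊤ : ℕ∞) (lg D i) U := fun i =>
    contDiffOn_const.mul ((pd_smooth hU hD i).mul (hD.inv h0))
  obtain ⟨L, hLdef⟩ : ∃ L : (Fin 4 → ℝ) → ℝ, L = fun v => (√(D v))⁻¹ := ⟨_, rfl⟩
  have hLpos : ∀ u ∈ U, 0 < L u := fun u hu => by
    rw [hLdef]; exact inv_pos.2 (Real.sqrt_pos.2 (hDpos u hu))
  have hL : ContDiffOn ℝ (⊤ : ℕ∞) L U := by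
    rw [hLdef]
    exact (hD.sqrt h0).inv (fun u hu => (Real.sqrt_pos.2 (hDpos u hu)).ne')
  have hDL : ∀ u ∈ U, D u = (L u ^ 2)⁻¹ := fun u hu => by
    rw [hLdef]; simp [Real.sq_sqrt (hDpos u hu).le]
  have hL1 : ∀ i, ∀ u ∈ U, pd i L u = L u * lg D i u := fun i u hu => by
    rw [hLdef]; exact pd_L (diffAt_of hU hD hu) (hDpos u hu) i
  have hL2 : ∀ i j, ∀ u ∈ U, pd i (pd j L) u = L u * (pd i (lg D j) u + lg D i u * lg D j u) := by
    intro i j u hu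
    rw [pd_congr hU (hL1 j) i u hu]
    have := ((diffAt_of hU hL hu).hasFDerivAt.mul (diffAt_of hU (hA j) hu).hasFDerivAt).fderiv
    have h1 := hL1 i u hu
    unfold pd at h1 ⊢
    erw [this]
    simp only [ContinuousLinearMap.add_apply, ContinuousLinearMap.smul_apply, smul_eq_mul]
    rw [h1]; ring
  have hs : ∀ u ∈ U, ∀ i j, pd i (lg D j) u = pd j (lg D i) u := by
    intro u hu i j
    have h1 := pd_symm hU hL i j hu
    rw [hL2 i j u hu, hL2 j i u hu] at h1
    have := mul_left_cancel₀ (hLpos u hu).ne' h1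
    linarith
  have hR : ∀ u ∈ U, ∀ i k, 2 * (pd i (lg D k) u + lg D i u * lg D k u)
      + et i k * (2 * (pd 0 (lg D 2) u + pd 1 (lg D 3) u)
        - 4 * (lg D 0 u * lg D 2 u + lg D 1 u * lg D 3 u)) = 0 := fun u hu i k => by
    rw [← ricci_eq hU D hD h0 hA hu (hs u hu) i k]; exact hRic u hu i k
  have hH0 : ∀ i k, et i k = 0 → ∀ u ∈ U, pd i (pd k L) u = 0 := by
    intro i k hik u hu
    have := hR u hu i k
    rw [hik] at this
    rw [hL2 i k u hu, show pd i (lg D k) u + lg D i u * lg D k u = 0 by linarith, mul_zero]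
  have e02 : et 0 2 = 1 := by simp [et]
  have e13 : et 1 3 = 1 := by simp [et]
  have hlam : ∀ u ∈ U, pd 0 (pd 2 L) u = pd 1 (pd 3 L) u := by
    intro u hu
    have h1 := hR u hu 0 2
    have h2 := hR u hu 1 3
    rw [e02] at h1
    rw [e13] at h2
    rw [hL2 0 2 u hu, hL2 1 3 u hu]
    congr 1
    linarith
  have hN : ∀ u ∈ U, L u * pd 0 (pd 2 L) u = pd 0 L u * pd 2 L u + pd 1 L u * pd 3 L u := by
    intro u hu
    have h1 := hR u hu 0 2
    have h2 := hR u hu 1 3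
    rw [e02] at h1
    rw [e13] at h2
    rw [hL2 0 2 u hu, hL1 0 u hu, hL1 1 u hu, hL1 2 u hu, hL1 3 u hu,
      show pd 0 (lg D 2) u + lg D 0 u * lg D 2 u
        = lg D 0 u * lg D 2 u + lg D 1 u * lg D 3 u by linarith]
    ring
  have sm := fun i => pd_smooth hU hL i
  obtain ⟨c6, hc6⟩ := const_of_pd hU hUconn (pd_smooth hU (sm 2) 0) (by
    intro i u hu
    have z : ∀ a b k, et b k = 0 → pd a (pd b (pd k L)) u = 0 := fun a b k hbk =>
      pd_zero_of hU (hH0 b k hbk) a u hu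
    fin_cases i
    · change pd 0 (pd 0 (pd 2 L)) u = 0
      rw [pd_congr hU hlam 0 u hu, pd_symm hU (sm 3) 0 1 hu]
      exact z _ _ _ (by simp [et])
    · change pd 1 (pd 0 (pd 2 L)) u = 0
      rw [pd_symm hU (sm 2) 1 0 hu]
      exact z _ _ _ (by simp [et])
    · change pd 2 (pd 0 (pd 2 L)) u = 0
      rw [pd_congr hU hlam 2 u hu, pd_symm hU (sm 3) 2 1 hu]
      exact z _ _ _ (by simp [et])
    · change pd 3 (pd 0 (pd 2 L)) u = 0
      rw [pd_symm hU (sm 2) 3 0 hu]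
      exact z _ _ _ (by simp [et]))
  have hess : ∀ i j, ∀ u ∈ U, pd i (pd j L) u = et j i * c6 := by
    intro i j u hu
    have q1 := hc6 u hu
    have q2 := q1
    rw [hlam u hu] at q2
    have q3 := q1
    rw [pd_symm hU hL 0 2 hu] at q3
    have q4 := q2
    rw [pd_symm hU hL 1 3 hu] at q4
    have z := fun h => hH0 i j h u hu
    fin_cases i <;> fin_cases j <;> simp [et] at z ⊢ <;> assumption
  obtain ⟨c, c1, hg, hLc⟩ := final_L hU hUconn hL c6 hess
  refine ⟨c1, c 0, c 1, c 2, c 3, c6, ?_, ?_⟩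
  · obtain ⟨u, hu⟩ := hUne
    have h1 := hN u hu
    rw [hc6 u hu, hg 0 u hu, hg 1 u hu, hg 2 u hu, hg 3 u hu, hLc u hu] at h1
    simp at h1
    linarith
  · intro u hu
    rw [← hLc u hu]
    exact ⟨(hLpos u hu).ne', hDL u hu⟩
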